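/- Let L₁, L₂ ⊆ Σ* be languages each recognized by a finite aperiodic monoid. Then the language of all words w admitting exactly one factorization w = uv with u ∈ L₁ and v ∈ L₂ is recognized by a finite aperiodic monoid. -/

import Mathlib

/-- `L` is recognized by a finite aperiodic monoid. -/
def RecAperiodic {A : Type} (L : Set (List A)) : Prop :=
  ∃ (M : Type) (_ : Monoid M) (_ : Fintype M) (φ : List A → M) (P : Set M),
    φ [] = 1 ∧ (∀ u v : List A, φ (u ++ v) = φ u * φ v) ∧
    (∃ n, 1 ≤ n ∧ ∀ x : M, x ^ n = x ^ (n + 1)) ∧ L = φ ⁻¹' P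

/-!
Let a single morphism `φ : A* → M` recognize both languages. Summing a weight
`g (φ u) (φ v)`, with values in a commutative monoid `K`, over the cuts `w = uv` is a computation
in the block product of `K` and `M`: the monoid of pairs `(m, f)` with `m ∈ M` and `f : M × M → K`,
where `f (x, y)` is the sum over the cuts of `w` read in the context `x · w · y`.
This is a square-zero extension of `M`, and it is aperiodic whenever `M` and `K` are: if
`m ^ N = m ^ (N + 1)` and `x = (m, f)`, then inserting one more factor `x` between two copies of
`x ^ N` only adds one more copy of `m ^ N • f • m ^ N` to the second component, and multiples of an
element of `K` are eventually constant. Taking for `K` the natural numbers truncated at `k + 1`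
makes it possible to test whether a word has exactly `k` factorizations.
-/

open Finset
open scoped RightActions

section Aperiodic

/-- Additive aperiodicity: the multiples of an element are constant from a uniform rank on. -/
def IsAddAperiodic (K : Type*) [AddMonoid K] : Prop :=
  ∃ n, 1 ≤ n ∧ ∀ x : K, n • x = (n + 1) • x

/-- Aperiodicity of a monoid: the powers of an element are constant from a uniform rank on. -/
def IsAperiodic (M : Type*) [Monoid M] : Prop :=
  ∃ n, 1 ≤ n ∧ ∀ x : M, x ^ n = x ^ (n + 1)

theorem pow_add_eq_of_pow_eq_pow_succ {M : Type*} [Monoid M] {x : M} {n : ℕ}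
    (h : x ^ n = x ^ (n + 1)) (k : ℕ) : x ^ (n + k) = x ^ n := by
  induction k with
  | zero => rfl
  | succ k ih => rw [← add_assoc, pow_succ, ih, ← pow_succ, ← h]

theorem IsAperiodic.prod {M N : Type*} [Monoid M] [Monoid N]
    (hM : IsAperiodic M) (hN : IsAperiodic N) : IsAperiodic (M × N) := by
  obtain ⟨m, hm, hM⟩ := hM
  obtain ⟨n, -, hN⟩ := hN
  refine ⟨m + n, by lia, fun x => Prod.ext ?_ ?_⟩
  · simp only [Prod.pow_fst, add_assoc, pow_add_eq_of_pow_eq_pow_succ (hM x.1)]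
  · simp only [Prod.pow_snd, add_comm m n, add_assoc, pow_add_eq_of_pow_eq_pow_succ (hN x.2)]

end Aperiodic

section SquareZero

variable {R V : Type*} [Monoid R] [AddMonoid V] [DistribMulAction R V] [DistribMulAction Rᵐᵒᵖ V]
  [SMulCommClass R Rᵐᵒᵖ V]

theorem pow_smul_snd_pow_smul_pow {x : TrivSqZeroExt R V} {n : ℕ} (h : x.fst ^ n = x.fst ^ (n + 1))
    (k : ℕ) :
    x.fst ^ n •> (x ^ k).snd <• x.fst ^ n = k • (x.fst ^ n •> x.snd <• x.fst ^ n) := by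
  induction k with
  | zero => simp
  | succ k ih =>
    have absorb_left : x.fst ^ n * x.fst ^ k = x.fst ^ n := by
      rw [← pow_add, pow_add_eq_of_pow_eq_pow_succ h]
    have absorb_right : x.fst * x.fst ^ n = x.fst ^ n := by rw [← pow_succ', ← h]
    calc x.fst ^ n •> (x ^ (k + 1)).snd <• x.fst ^ n
        = (x.fst ^ n * x.fst ^ k) •> x.snd <• x.fst ^ n +
            x.fst ^ n •> (x ^ k).snd <• (x.fst * x.fst ^ n) := by
          simp only [pow_succ x k, TrivSqZeroExt.snd_mul, TrivSqZeroExt.fst_pow, smul_add,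
            mul_smul, MulOpposite.op_mul, smul_comm _ (MulOpposite.op x.fst)]
      _ = (k + 1) • (x.fst ^ n •> x.snd <• x.fst ^ n) := by
          rw [absorb_left, absorb_right, ih, succ_nsmul']

theorem snd_pow_add_add {x : TrivSqZeroExt R V} {n : ℕ} (h : x.fst ^ n = x.fst ^ (n + 1))
    (k : ℕ) :
    (x ^ (n + k + n)).snd = x.fst ^ n •> (x ^ n).snd +
      k • (x.fst ^ n •> x.snd <• x.fst ^ n) + (x ^ n).snd <• x.fst ^ n := by
  have absorb : x.fst ^ k * x.fst ^ n = x.fst ^ n := by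
    rw [← pow_add, add_comm, pow_add_eq_of_pow_eq_pow_succ h]
  calc (x ^ (n + k + n)).snd
      = x.fst ^ (n + k) •> (x ^ n).snd +
          (x.fst ^ n •> (x ^ k).snd + (x ^ n).snd <• x.fst ^ k) <• x.fst ^ n := by
        simp only [pow_add x, TrivSqZeroExt.snd_mul, TrivSqZeroExt.fst_mul, TrivSqZeroExt.fst_pow,
          pow_add x.fst]
    _ = x.fst ^ n •> (x ^ n).snd + k • (x.fst ^ n •> x.snd <• x.fst ^ n) +
          (x ^ n).snd <• x.fst ^ n := by
        rw [pow_add_eq_of_pow_eq_pow_succ h, smul_add, pow_smul_snd_pow_smul_pow h, ← mul_smul,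
          ← MulOpposite.op_mul, absorb, add_assoc]

theorem IsAperiodic.trivSqZeroExt (hR : IsAperiodic R) (hV : IsAddAperiodic V) :
    IsAperiodic (TrivSqZeroExt R V) := by
  obtain ⟨n, hn, hR⟩ := hR
  obtain ⟨k, -, hV⟩ := hV
  refine ⟨n + k + n, by lia, fun x => TrivSqZeroExt.ext ?_ ?_⟩
  · simp only [TrivSqZeroExt.fst_pow, add_assoc, pow_add_eq_of_pow_eq_pow_succ (hR x.fst)]
  · rw [show n + k + n + 1 = n + (k + 1) + n by lia, snd_pow_add_add (hR x.fst),
      snd_pow_add_add (hR x.fst), ← hV]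

end SquareZero

section BlockProduct

/-- The functions `M × M → K`, in curried form, as a two-sided `M`-module. The arguments stand
for the left and the right context of a factor, which the two actions enlarge. A separate type keeps
these actions apart from the pointwise ones on functions. -/
def ContextFun (M K : Type*) := M → M → K

namespace ContextFun

variable {M K : Type*}

instance [Finite M] [Finite K] : Finite (ContextFun M K) := inferInstanceAs (Finite (M → M → K))

variable [AddMonoid K]

instance : AddMonoid (ContextFun M K) := inferInstanceAs (AddMonoid (M → M → K))

theorem add_apply (f g : ContextFun M K) (x y : M) : (f + g) x y = f x y + g x y := rfl

variable [Monoid M]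

instance : DistribMulAction M (ContextFun M K) where
  smul a f := fun x y => f (x * a) y
  one_smul f := funext₂ fun x y => congrArg (f · y) (mul_one x)
  mul_smul a b f := funext₂ fun x y => congrArg (f · y) (mul_assoc x a b).symm
  smul_zero _ := rfl
  smul_add _ _ _ := rfl

instance : DistribMulAction Mᵐᵒᵖ (ContextFun M K) where
  smul b f := fun x y => f x (b.unop * y)
  one_smul f := funext₂ fun x y => congrArg (f x) (one_mul y)
  mul_smul a b f := funext₂ fun x y => congrArg (f x) (mul_assoc b.unop a.unop y)
  smul_zero _ := rfl
  smul_add _ _ _ := rfl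

instance : SMulCommClass M Mᵐᵒᵖ (ContextFun M K) := ⟨fun _ _ _ => rfl⟩

theorem smul_apply (a : M) (f : ContextFun M K) (x y : M) : (a •> f) x y = f (x * a) y := rfl

theorem op_smul_apply (b : M) (f : ContextFun M K) (x y : M) : (f <• b) x y = f x (b * y) := rfl

end ContextFun

theorem IsAddAperiodic.contextFun {M K : Type*} [AddMonoid K] (hK : IsAddAperiodic K) :
    IsAddAperiodic (ContextFun M K) := by
  obtain ⟨n, hn, hK⟩ := hK
  exact ⟨n, hn, fun f => funext₂ fun x y => hK (f x y)⟩

/-- The block product of `K` and `M`, realized as a square-zero extension. -/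
abbrev BlockProduct (K M : Type*) := TrivSqZeroExt M (ContextFun M K)

instance {K M : Type*} [Finite K] [Finite M] : Finite (BlockProduct K M) :=
  inferInstanceAs (Finite (M × ContextFun M K))

variable {A M K : Type*} [Monoid M]

/-- The morphism to the block product that sums the weights `g (φ u) (φ v)` of the cuts `uv` of a
word. A letter only accounts for the cut in front of it, so that each cut inside a product is
counted once; the cut at the end of the word is left out. -/
def cutSumHom [AddMonoid K] (φ : FreeMonoid A →* M) (g : M → M → K) :
    FreeMonoid A →* BlockProduct K M :=
  FreeMonoid.lift fun a => (φ (.of a), fun x y => g x (φ (.of a) * y))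

theorem fst_cutSumHom [AddMonoid K] (φ : FreeMonoid A →* M) (g : M → M → K) (w : FreeMonoid A) :
    (cutSumHom φ g w).fst = φ w := by
  induction w using FreeMonoid.inductionOn' with
  | one => simp
  | of_mul a w ih =>
    rw [map_mul, map_mul, TrivSqZeroExt.fst_mul, ih]
    rfl

variable [AddCommMonoid K]

theorem snd_cutSumHom_apply (φ : FreeMonoid A →* M) (g : M → M → K) (w : List A) (x y : M) :
    (cutSumHom φ g (.ofList w)).snd x y =
      ∑ i ∈ range w.length, g (x * φ (.ofList (w.take i))) (φ (.ofList (w.drop i)) * y) := by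
  induction w generalizing x with
  | nil => rfl
  | cons a w ih =>
    have snd_of : (cutSumHom φ g (.of a)).snd x (φ (.ofList w) * y) =
        g x (φ (.of a) * (φ (.ofList w) * y)) := rfl
    rw [FreeMonoid.ofList_cons, map_mul, TrivSqZeroExt.snd_mul, ContextFun.add_apply,
      ContextFun.smul_apply, ContextFun.op_smul_apply, fst_cutSumHom, fst_cutSumHom, ih, snd_of,
      List.length_cons, sum_range_succ']
    simp [mul_assoc]

theorem sum_cuts_eq (φ : FreeMonoid A →* M) (g : M → M → K) (w : List A) :
    ∑ i ∈ range (w.length + 1), g (φ (.ofList (w.take i))) (φ (.ofList (w.drop i))) =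
      (cutSumHom φ g (.ofList w)).snd 1 1 + g (cutSumHom φ g (.ofList w)).fst 1 := by
  rw [sum_range_succ, snd_cutSumHom_apply, fst_cutSumHom]
  simp

end BlockProduct

section Recognition

variable {A : Type}

theorem recAperiodic_iff_exists_hom {L : Set (List A)} :
    RecAperiodic L ↔ ∃ (M : Type) (_ : Monoid M) (_ : Finite M) (φ : FreeMonoid A →* M) (P : Set M),
      IsAperiodic M ∧ L = {w | φ (.ofList w) ∈ P} := by
  constructor
  · rintro ⟨M, _, _, φ, P, map_nil, map_append, hM, hL⟩
    exact ⟨M, _, inferInstance,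
      ⟨⟨fun w => φ w.toList, map_nil⟩, fun u v => map_append u.toList v.toList⟩, P, hM, hL⟩
  · rintro ⟨M, _, _, φ, P, hM, hL⟩
    exact ⟨M, _, Fintype.ofFinite M, fun w => φ (.ofList w), P, map_one φ,
      fun u v => map_mul φ (.ofList u) (.ofList v), hM, hL⟩

theorem RecAperiodic.exists_common_hom {L₁ L₂ : Set (List A)}
    (h₁ : RecAperiodic L₁) (h₂ : RecAperiodic L₂) :
    ∃ (M : Type) (_ : Monoid M) (_ : Finite M) (φ : FreeMonoid A →* M) (P₁ P₂ : Set M),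
      IsAperiodic M ∧ L₁ = {w | φ (.ofList w) ∈ P₁} ∧ L₂ = {w | φ (.ofList w) ∈ P₂} := by
  obtain ⟨M₁, _, _, φ₁, P₁, hM₁, hL₁⟩ := recAperiodic_iff_exists_hom.1 h₁
  obtain ⟨M₂, _, _, φ₂, P₂, hM₂, hL₂⟩ := recAperiodic_iff_exists_hom.1 h₂
  exact ⟨M₁ × M₂, inferInstance, inferInstance, φ₁.prod φ₂, Prod.fst ⁻¹' P₁, Prod.snd ⁻¹' P₂,
    hM₁.prod hM₂, hL₁, hL₂⟩

theorem recAperiodic_sum_cuts_mem {M K : Type} [Monoid M] [Finite M] [AddCommMonoid K] [Finite K]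
    (hM : IsAperiodic M) (hK : IsAddAperiodic K) (φ : FreeMonoid A →* M) (g : M → M → K)
    (S : Set K) :
    RecAperiodic {w : List A |
      ∑ i ∈ range (w.length + 1), g (φ (.ofList (w.take i))) (φ (.ofList (w.drop i))) ∈ S} := by
  refine recAperiodic_iff_exists_hom.2 ⟨BlockProduct K M, inferInstance, inferInstance,
    cutSumHom φ g, {z | z.snd 1 1 + g z.fst 1 ∈ S},
    hM.trivSqZeroExt hK.contextFun, ?_⟩
  simp only [sum_cuts_eq, Set.mem_ofPred_eq]

end Recognition

section Counting

/-- The congruence on `ℕ` that identifies all numbers from `t` on; its quotient counts up to the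
threshold `t`. -/
def truncAddCon (t : ℕ) : AddCon ℕ where
  r a b := min t a = min t b
  iseqv := ⟨fun _ => rfl, Eq.symm, Eq.trans⟩
  add' := by lia

theorem truncAddCon_coe_eq_coe {t a b : ℕ} :
    (a : (truncAddCon t).Quotient) = b ↔ min t a = min t b :=
  (truncAddCon t).eq

instance (t : ℕ) : Finite (truncAddCon t).Quotient := by
  refine Finite.of_surjective (fun i : Fin (t + 1) => ((i : ℕ) : (truncAddCon t).Quotient)) ?_
  rintro ⟨a⟩
  exact ⟨⟨min t a, by lia⟩, truncAddCon_coe_eq_coe.2 (by simp)⟩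

theorem isAddAperiodic_truncAddCon_quotient (t : ℕ) :
    IsAddAperiodic (truncAddCon t).Quotient := by
  refine ⟨t + 1, by lia, ?_⟩
  rintro ⟨a⟩
  refine truncAddCon_coe_eq_coe.2 ?_
  obtain rfl | ha := Nat.eq_zero_or_pos a
  · simp
  · have hle : t + 1 ≤ (t + 1) * a := Nat.le_mul_of_pos_right _ ha
    change min t ((t + 1) * a) = min t ((t + 1 + 1) * a)
    lia

variable {A : Type*}

theorem ncard_factorizations_eq_sum (P : List A → List A → Prop) [∀ u v, Decidable (P u v)]
    (w : List A) :
    {p : List A × List A | p.1 ++ p.2 = w ∧ P p.1 p.2}.ncard =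
      ∑ i ∈ range (w.length + 1), if P (w.take i) (w.drop i) then 1 else 0 := by
  rw [← card_filter, ← Set.ncard_coe_finset]
  refine Set.ncard_congr (fun p _ => p.1.length) ?_ ?_ ?_
  · rintro ⟨u, v⟩ ⟨rfl, h⟩
    simpa using h
  · rintro ⟨u, v⟩ ⟨u', v'⟩ ⟨rfl, -⟩ ⟨h, -⟩ hlen
    simpa [eq_comm] using List.append_inj h hlen.symm
  · intro i hi
    simp only [coe_filter, mem_range, Set.mem_ofPred_eq] at hi
    exact ⟨(w.take i, w.drop i), ⟨List.take_append_drop i w, hi.2⟩,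
      List.length_take_of_le (by lia)⟩

end Counting

theorem RecAperiodic.ncard_factorizations_eq {A : Type} {L₁ L₂ : Set (List A)}
    (h₁ : RecAperiodic L₁) (h₂ : RecAperiodic L₂) (k : ℕ) :
    RecAperiodic {w : List A |
      {p : List A × List A | p.1 ++ p.2 = w ∧ p.1 ∈ L₁ ∧ p.2 ∈ L₂}.ncard = k} := by
  classical
  obtain ⟨M, _, _, φ, P₁, P₂, hM, rfl, rfl⟩ := h₁.exists_common_hom h₂
  let toQuot : ℕ →+ (truncAddCon (k + 1)).Quotient := (truncAddCon (k + 1)).mk'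
  have toQuot_eq (n : ℕ) : toQuot n = toQuot k ↔ n = k := truncAddCon_coe_eq_coe.trans (by lia)
  have hrec := recAperiodic_sum_cuts_mem hM (isAddAperiodic_truncAddCon_quotient (k + 1)) φ
    (fun x y => toQuot (if x ∈ P₁ ∧ y ∈ P₂ then 1 else 0)) {toQuot k}
  simp only [← map_sum, Set.mem_singleton_iff, toQuot_eq,
    ← ncard_factorizations_eq_sum fun u v => φ (.ofList u) ∈ P₁ ∧ φ (.ofList v) ∈ P₂] at hrec
  exact hrec

theorem stmt_11_general {A : Type} (L₁ L₂ : Set (List A))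
    (h₁ : RecAperiodic L₁) (h₂ : RecAperiodic L₂) :
    RecAperiodic {w : List A |
      ∃! p : List A × List A, p.1 ++ p.2 = w ∧ p.1 ∈ L₁ ∧ p.2 ∈ L₂} := by
  convert h₁.ncard_factorizations_eq h₂ 1 using 3 with w
  simp only [Set.ncard_eq_one, Set.eq_singleton_iff_unique_mem, Set.mem_ofPred_eq, ExistsUnique]

/-- Theorem: if `L₁` and `L₂` are recognized by finite aperiodic monoids, then
so is the language of words admitting exactly one factorization `uv` with
`u ∈ L₁` and `v ∈ L₂`. -/
theorem stmt_11 {A : Type} [Fintype A] (L₁ L₂ : Set (List A))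
    (h₁ : RecAperiodic L₁) (h₂ : RecAperiodic L₂) :
    RecAperiodic {w : List A |
      ∃! p : List A × List A, p.1 ++ p.2 = w ∧ p.1 ∈ L₁ ∧ p.2 ∈ L₂} :=
  stmt_11_general L₁ L₂ h₁ h₂
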